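/- Let G be a finite 2-group whose abelianization is isomorphic to ℤ/2ℤ × ℤ/2ℤ. Then G is isomorphic to one of: ℤ/2ℤ × ℤ/2ℤ, a generalized quaternion group Q_{2^m} (m ≥ 3), a dihedral group D_{2^m} (m ≥ 3), or a semidihedral group S_{2^m} (m ≥ 4). -/

import Mathlib

/-- Relations of the semidihedral group of order `2 ^ m`:
`r ^ (2 ^ (m-1)) = 1`, `a ^ 2 = 1`, `a r a⁻¹ = r ^ (2 ^ (m-2) - 1)`. -/
def semidihedralRels (m : ℕ) : Set (FreeGroup (Fin 2)) :=
  {FreeGroup.of 0 ^ 2 ^ (m - 1), FreeGroup.of 1 ^ 2,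
   FreeGroup.of 1 * FreeGroup.of 0 * (FreeGroup.of 1)⁻¹ *
     (FreeGroup.of 0 ^ (2 ^ (m - 2) - 1))⁻¹}

/-- The semidihedral group of order `2 ^ m`, as a presented group. -/
def SemidihedralGroup (m : ℕ) : Type := PresentedGroup (semidihedralRels m)

instance (m : ℕ) : Group (SemidihedralGroup m) :=
  inferInstanceAs (Group (PresentedGroup (semidihedralRels m)))

/-!
For an abelian subgroup `A` of index two and `b ∉ A`, the map `a ↦ ⁅a, b⁆` is a homomorphism on `A`
with image the commutator subgroup and kernel the centralizer of `b` in `A`. Hence `G / [G, G]` has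
order four exactly when `b` centralizes only two elements of `A`. By induction, applied to the
quotient of `G` by the central part `N` of `[G, G]`, some `x` generates a subgroup of index two
modulo `N`; the preimage of that subgroup is abelian, and counting the elements centralized by `b`
shows that `x` already generates a subgroup of index two in `G`. Now `b ^ 2` and `x * (b * x * b⁻¹)`
both lie among the two elements of `⟨x⟩` centralized by `b`, which leaves the presentations of the
quaternion, dihedral and semidihedral groups.
-/

open Subgroup
open scoped commutatorElement

section AbelianIndexTwo

variable {G : Type*} [Group G] {A : Subgroup G} {a b u v : G}

/-- The map `a ↦ ⁅a, b⁆` on an abelian normal subgroup `A`, where it is multiplicative. Its values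
lie in `A`, but are taken in `G` so that its range can be compared with `commutator G`. -/
def commutatorHom (A : Subgroup G) [hA : A.Normal] [IsMulCommutative A] (b : G) : A →* G where
  toFun a := ⁅(a : G), b⁆
  map_one' := commutatorElement_one_left b
  map_mul' a₁ a₂ := by
    have h₁ : b * (a₁ : G)⁻¹ * b⁻¹ ∈ A := hA.conj_mem _ (inv_mem a₁.2) b
    have h₂ : ⁅(a₂ : G), b⁆ ∈ A := by
      rw [commutatorElement_def, mul_assoc, mul_assoc, ← mul_assoc b]
      exact mul_mem a₂.2 (hA.conj_mem _ (inv_mem a₂.2) b)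
    calc ⁅(a₁ : G) * a₂, b⁆ = a₁ * (⁅(a₂ : G), b⁆ * (b * (a₁ : G)⁻¹ * b⁻¹)) := by
          simp only [commutatorElement_def]; group
      _ = a₁ * ((b * (a₁ : G)⁻¹ * b⁻¹) * ⁅(a₂ : G), b⁆) := by
          rw [setLike_mul_comm h₂ h₁]
      _ = ⁅(a₁ : G), b⁆ * ⁅(a₂ : G), b⁆ := by simp only [commutatorElement_def]; group

theorem ker_commutatorHom [A.Normal] [IsMulCommutative A] (b : G) :
    (commutatorHom A b).ker = (centralizer {b}).subgroupOf A := by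
  ext a
  rw [MonoidHom.mem_ker, mem_subgroupOf, mem_centralizer_singleton_iff]
  exact commutatorElement_eq_one_iff_mul_comm

theorem commutatorElement_mul_right_of_mem [hA : A.Normal] [IsMulCommutative A] {c : G}
    (ha : a ∈ A) (hc : c ∈ A) (b : G) : ⁅a, c * b⁆ = ⁅a, b⁆ := by
  have hconj : b * a⁻¹ * b⁻¹ ∈ A := hA.conj_mem _ (inv_mem ha) b
  calc ⁅a, c * b⁆ = a * (c * (b * a⁻¹ * b⁻¹) * c⁻¹) := by rw [commutatorElement_def]; group
    _ = ⁅a, b⁆ := by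
      rw [setLike_mul_comm hc hconj, commutatorElement_def]; group

theorem range_commutatorHom [A.Normal] [IsMulCommutative A] (hA : A.index = 2) (hb : b ∉ A) :
    (commutatorHom A b).range = commutator G := by
  apply le_antisymm
  · rintro _ ⟨a, rfl⟩
    exact commutator_mem_commutator (mem_top _) (mem_top _)
  have mem_range {a h : G} (ha : a ∈ A) (hh : h ∉ A) : ⁅a, h⁆ ∈ (commutatorHom A b).range := by
    have hc : h * b⁻¹ ∈ A := by simp [mul_mem_iff_of_index_two hA, hh, hb]
    rw [← inv_mul_cancel_right h b, commutatorElement_mul_right_of_mem ha hc]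
    exact ⟨⟨a, ha⟩, rfl⟩
  rw [_root_.commutator_def, commutator_le]
  rintro g - h -
  by_cases hg : g ∈ A <;> by_cases hh : h ∈ A
  · rw [commutatorElement_eq_one_iff_mul_comm.2 (setLike_mul_comm hg hh)]
    exact one_mem _
  · exact mem_range hg hh
  · rw [← commutatorElement_inv]
    exact inv_mem (mem_range hh hg)
  · have hgh : ⁅g, h⁆ = ⁅g * h⁻¹, h⁆ := by simp only [commutatorElement_def]; group
    rw [hgh]
    exact mem_range (by simp [mul_mem_iff_of_index_two hA, hg, hh]) hh

theorem index_commutator_eq_two_mul_card_centralizer [Finite G] [IsMulCommutative A]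
    (hA : A.index = 2) (hb : b ∉ A) :
    (commutator G).index = 2 * Nat.card ((centralizer {b}).subgroupOf A) := by
  have : A.Normal := normal_of_index_eq_two hA
  have hcard : Nat.card ((centralizer {b}).subgroupOf A) * Nat.card (commutator G) =
      Nat.card A := by
    rw [← ker_commutatorHom, ← range_commutatorHom hA hb, ← index_ker]
    exact card_mul_index _
  refine Nat.eq_of_mul_eq_mul_left (Nat.card_pos (α := commutator G)) ?_
  rw [card_mul_index, ← card_mul_index A, hA, ← hcard]
  ring

theorem commute_mul_conj_of_index_two [IsMulCommutative A] (hA : A.index = 2) (ha : a ∈ A)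
    (b : G) : Commute b (a * (b * a * b⁻¹)) := by
  have hconj : b * a * b⁻¹ ∈ A := (normal_of_index_eq_two hA).conj_mem a ha b
  calc b * (a * (b * a * b⁻¹)) = (b * a * b⁻¹) * (b ^ 2 * a) * b⁻¹ := by group
    _ = (b * a * b⁻¹) * (a * b ^ 2) * b⁻¹ := by
      rw [setLike_mul_comm (sq_mem_of_index_two hA b) ha]
    _ = (b * a * b⁻¹) * a * b := by group
    _ = a * (b * a * b⁻¹) * b := by rw [setLike_mul_comm hconj ha]

variable [Finite G] [IsMulCommutative A] (h4 : (commutator G).index = 4) (hA : A.index = 2)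
  (hb : b ∉ A)
include h4 hA hb

theorem card_centralizer_subgroupOf_eq_two :
    Nat.card ((centralizer {b}).subgroupOf A) = 2 := by
  have := index_commutator_eq_two_mul_card_centralizer hA hb
  omega

theorem card_dvd_two_of_le_center {N : Subgroup G} (hNA : N ≤ A) (hN : N ≤ center G) :
    Nat.card N ∣ 2 := by
  rw [← card_centralizer_subgroupOf_eq_two h4 hA hb,
    ← Nat.card_congr (subgroupOfEquivOfLe hNA).toEquiv]
  exact card_dvd_of_le fun n hn =>
    mem_subgroupOf.2 (center_le_centralizer _ (hN (mem_subgroupOf.1 hn)))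

theorem eq_one_or_eq_of_commute (hu : u ∈ A) (hbu : Commute b u) (hu1 : u ≠ 1)
    (hv : v ∈ A) (hbv : Commute b v) : v = 1 ∨ v = u := by
  obtain ⟨w, -, hw⟩ := (Nat.card_eq_two_iff' (1 : (centralizer {b}).subgroupOf A)).1
    (card_centralizer_subgroupOf_eq_two h4 hA hb)
  have eq_w {c : G} (hc : c ∈ A) (hbc : Commute b c) (hc1 : c ≠ 1) : c = w := by
    have hmem : (⟨c, hc⟩ : A) ∈ (centralizer {b}).subgroupOf A := by
      rw [mem_subgroupOf, mem_centralizer_singleton_iff]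
      exact hbc.symm.eq
    have := hw ⟨⟨c, hc⟩, hmem⟩ (by simpa [Subtype.ext_iff] using hc1)
    exact congrArg (fun d : (centralizer {b}).subgroupOf A => ((d : A) : G)) this
  refine or_iff_not_imp_left.2 fun hv1 => ?_
  rw [eq_w hv hbv hv1, ← eq_w hu hbu hu1]

-- The norm `a * (b * a * b⁻¹)` is centralized by `b`, so it squares to one: `b` inverts squares.
theorem conj_sq_eq_inv (ha : a ∈ A) : b * a ^ 2 * b⁻¹ = (a ^ 2)⁻¹ := by
  have hconj : b * a * b⁻¹ ∈ A := (normal_of_index_eq_two hA).conj_mem a ha b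
  have hnorm : (a * (b * a * b⁻¹)) ^ 2 = 1 := by
    have hmem : (⟨_, mul_mem ha hconj⟩ : A) ∈ (centralizer {b}).subgroupOf A := by
      rw [mem_subgroupOf, mem_centralizer_singleton_iff]
      exact (commute_mul_conj_of_index_two hA ha b).symm.eq
    have := pow_card_eq_one' (G := (centralizer {b}).subgroupOf A) (x := ⟨_, hmem⟩)
    rw [card_centralizer_subgroupOf_eq_two h4 hA hb] at this
    simpa [Subtype.ext_iff] using this
  rw [Commute.mul_pow (setLike_mul_comm ha hconj), conj_pow] at hnorm
  exact eq_inv_of_mul_eq_one_right hnorm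

theorem commute_sq_of_pow_four_eq_one (ha : a ∈ A) (h : a ^ 4 = 1) : Commute b (a ^ 2) := by
  have hinv : (a ^ 2)⁻¹ = a ^ 2 := inv_eq_of_mul_eq_one_left (by rw [← pow_add, h])
  exact mul_inv_eq_iff_eq_mul.1 ((conj_sq_eq_inv h4 hA hb ha).trans hinv)

theorem sq_mem_of_pow_four_eq_one {N : Subgroup G} (hNA : N ≤ A) (hNc : N ≤ center G) (hN : N ≠ ⊥)
    (ha : a ∈ A) (h : a ^ 4 = 1) : a ^ 2 ∈ N := by
  obtain ⟨z, hzN, hz1⟩ := N.bot_or_exists_ne_one.resolve_left hN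
  rcases eq_one_or_eq_of_commute h4 hA hb (hNA hzN) (mem_center_iff.1 (hNc hzN) b) hz1
    (pow_mem ha 2) (commute_sq_of_pow_four_eq_one h4 hA hb ha h) with h | h
  · exact h ▸ one_mem N
  · exact h ▸ hzN

end AbelianIndexTwo

section CyclicIndexTwo

variable {G : Type*} [Group G]

theorem exists_notMem_of_index_two {H : Subgroup G} (hH : H.index = 2) : ∃ b, b ∉ H := by
  obtain ⟨b, hb, -⟩ := index_eq_two_iff_exists_notMem_and.1 hH
  exact ⟨b, hb⟩

theorem index_zpowers_eq_two_iff [Finite G] {x : G} :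
    (zpowers x).index = 2 ↔ orderOf x * 2 = Nat.card G := by
  rw [← card_mul_index (zpowers x), Nat.card_zpowers, Nat.mul_right_inj (orderOf_pos x).ne',
    eq_comm]

theorem inf_center_ne_bot {p : ℕ} [Fact p.Prime] [Finite G] (hG : IsPGroup p G) {H : Subgroup G}
    [H.Normal] (hH : H ≠ ⊥) : H ⊓ center G ≠ ⊥ := by
  have hdvd : p ∣ Nat.card H :=
    (hG.to_subgroup H).card_eq_or_dvd.resolve_left (mt card_eq_one.1 hH)
  obtain ⟨c, hc, hc1⟩ := (hG.of_equiv ConjAct.toConjAct)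
    |>.exists_fixed_point_of_prime_dvd_card_of_fixed_point H hdvd (a := 1) fun g => smul_one g
  have hcenter : (c : G) ∈ center G := mem_center_iff.2 fun g => by
    have := congrArg Subtype.val (hc (ConjAct.toConjAct g))
    rwa [ConjAct.Subgroup.val_conj_smul, ConjAct.toConjAct_smul, mul_inv_eq_iff_eq_mul] at this
  exact fun hbot => hc1 (Subtype.ext ((eq_bot_iff_forall _).1 hbot c ⟨c.2, hcenter⟩).symm)

theorem index_commutator_quotient {N : Subgroup G} [N.Normal] (hN : N ≤ commutator G) :
    (commutator (G ⧸ N)).index = (commutator G).index := by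
  have hsurj := QuotientGroup.mk'_surjective N
  rw [_root_.commutator_def, ← map_top_of_surjective _ hsurj, ← map_commutator,
    ← _root_.commutator_def,
    index_map_eq _ hsurj (by rwa [QuotientGroup.ker_mk'])]

theorem isMulCommutative_comap_mk'_of_le_center {N : Subgroup G} [N.Normal] (hN : N ≤ center G)
    (C : Subgroup (G ⧸ N)) [IsCyclic C] :
    IsMulCommutative (C.comap (QuotientGroup.mk' N)) := by
  refine ((QuotientGroup.mk' N).subgroupComap C).isMulCommutative_of_isCyclic_of_ker_le_center ?_
  intro a ha
  have haN : (a : G) ∈ N := (QuotientGroup.eq_one_iff _).1 (congrArg Subtype.val ha)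
  exact mem_center_iff.2 fun g => Subtype.ext (mem_center_iff.1 (hN haN) g)

-- Either `x ^ o` generates `N`, or `x` has order `o` and the involution `x ^ (o / 2)` is
-- centralized by `b` without lying in `N`, which leaves too many elements centralized by `b`.
theorem index_zpowers_eq_two_of_quotient [Finite G] (h4 : (commutator G).index = 4)
    (h16 : 16 ∣ Nat.card G) {N : Subgroup G} [N.Normal] (hNc : N ≤ center G) (hN : N ≠ ⊥) {x : G}
    (hx : (zpowers (x : G ⧸ N)).index = 2) : (zpowers x).index = 2 := by
  let A := (zpowers (x : G ⧸ N)).comap (QuotientGroup.mk' N)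
  have hA : A.index = 2 :=
    (index_comap_of_surjective _ (QuotientGroup.mk'_surjective N)).trans hx
  have : IsMulCommutative A := isMulCommutative_comap_mk'_of_le_center hNc _
  have hAsup : A = N ⊔ zpowers x := by
    rw [← QuotientGroup.comap_map_mk', MonoidHom.map_zpowers]; rfl
  have hxA : x ∈ A := hAsup ▸ mem_sup_right (mem_zpowers x)
  have hNA : N ≤ A := hAsup ▸ le_sup_left
  obtain ⟨b, hb⟩ := exists_notMem_of_index_two hA
  set o := orderOf (x : G ⧸ N) with ho
  have hxo : x ^ o ∈ N := by
    rw [← QuotientGroup.eq_one_iff, QuotientGroup.mk_pow, ho, pow_orderOf_eq_one]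
  by_cases hxo1 : x ^ o = 1
  · obtain ⟨q, hq⟩ : 4 ∣ o := by
      have hcard : 16 ∣ Nat.card N * (o * 2) := by
        rwa [ho, ← Nat.card_zpowers, ← hx, card_mul_index, mul_comm,
          ← card_eq_card_quotient_mul_card_subgroup]
      rcases (Nat.dvd_prime Nat.prime_two).1
        (card_dvd_two_of_le_center h4 hA hb hNA hNc) with h | h <;> rw [h] at hcard <;> omega
    have hpow : (x ^ q) ^ 4 = 1 := by rw [← pow_mul, mul_comm, ← hq, hxo1]
    have hmem := sq_mem_of_pow_four_eq_one h4 hA hb hNA hNc hN (pow_mem hxA q) hpow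
    rw [← pow_mul, ← QuotientGroup.eq_one_iff, QuotientGroup.mk_pow] at hmem
    have ho_pos : 0 < o := orderOf_pos _
    exact absurd hmem (pow_ne_one_of_lt_orderOf (by omega) (by omega))
  · have commute_b {n : G} (hn : n ∈ N) : Commute b n := mem_center_iff.1 (hNc hn) b
    have hNx : N ≤ zpowers x := fun n hn => by
      rcases eq_one_or_eq_of_commute h4 hA hb (hNA hxo) (commute_b hxo) hxo1 (hNA hn)
        (commute_b hn) with rfl | rfl
      · exact one_mem _
      · exact npow_mem_zpowers x o
    rwa [hAsup, sup_eq_right.2 hNx] at hA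

variable [Finite G]

theorem exists_orderOf_eq_four_of_card_eq_eight (h8 : Nat.card G = 8)
    (hG : ¬ IsMulCommutative G) : ∃ x : G, orderOf x = 4 := by
  obtain ⟨x, hx⟩ : ∃ x : G, ¬ orderOf x ∣ 2 := by
    by_contra! h
    exact hG ⟨⟨Commute.of_orderOf_dvd_two h⟩⟩
  have hx8 : orderOf x ≠ 8 := fun h =>
    have := isCyclic_of_orderOf_eq_card x (h.trans h8.symm)
    hG inferInstance
  obtain ⟨k, hk, hxk⟩ := (Nat.dvd_prime_pow Nat.prime_two).1
    ((orderOf_dvd_natCard x).trans (dvd_of_eq h8 : Nat.card G ∣ 2 ^ 3))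
  refine ⟨x, ?_⟩
  interval_cases k <;> simp_all

theorem exists_index_zpowers_eq_two_of_card_le_eight (h4 : (commutator G).index = 4)
    (h8 : Nat.card G ≤ 8) : ∃ x : G, (zpowers x).index = 2 := by
  simp only [index_zpowers_eq_two_iff]
  have hcard := card_mul_index (commutator G)
  rw [h4] at hcard
  by_cases hcomm : commutator G = ⊥
  · rw [card_eq_one.2 hcomm] at hcard
    obtain ⟨x, hx⟩ := exists_prime_orderOf_dvd_card' (G := G) 2 (by omega)
    exact ⟨x, by omega⟩
  · have hlt := (one_lt_card_iff_ne_bot _).2 hcomm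
    obtain ⟨x, hx⟩ := exists_orderOf_eq_four_of_card_eq_eight (G := G) (by omega)
      (mt (commutator_eq_bot_iff G).2 hcomm)
    exact ⟨x, by omega⟩

theorem exists_index_zpowers_eq_two (hG : IsPGroup 2 G) (h4 : (commutator G).index = 4) :
    ∃ x : G, (zpowers x).index = 2 := by
  induction hn : Nat.card G using Nat.strong_induction_on generalizing G with
  | _ n ih =>
  subst hn
  by_cases h8 : Nat.card G ≤ 8
  · exact exists_index_zpowers_eq_two_of_card_le_eight h4 h8
  have h16 : 16 ∣ Nat.card G := by
    obtain ⟨k, hk⟩ := IsPGroup.iff_card.1 hG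
    have : 3 < k := (Nat.pow_lt_pow_iff_right one_lt_two).1 (by omega)
    exact hk ▸ pow_dvd_pow 2 this
  have hcomm : commutator G ≠ ⊥ := fun h => by
    have hcard := card_mul_index (commutator G)
    rw [h4, card_eq_one.2 h] at hcard
    omega
  let N := commutator G ⊓ center G
  have hN : N ≠ ⊥ := inf_center_ne_bot hG hcomm
  have hlt : Nat.card (G ⧸ N) < Nat.card G := by
    rw [card_eq_card_quotient_mul_card_subgroup N]
    exact lt_mul_of_one_lt_right Nat.card_pos ((one_lt_card_iff_ne_bot N).2 hN)
  obtain ⟨y, hy⟩ := ih _ hlt (hG.to_quotient N)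
    ((index_commutator_quotient inf_le_left).trans h4) rfl
  obtain ⟨x, rfl⟩ := QuotientGroup.mk_surjective y
  exact ⟨x, index_zpowers_eq_two_of_quotient h4 h16 inf_le_right hN hy⟩

end CyclicIndexTwo

section CyclicExtension

variable {G : Type*} [Group G] {x b : G} {n s : ℕ} {t : ℤ}

/-- The relations `x ^ n = 1`, `b ^ 2 = x ^ s`, `b * x * b⁻¹ = x ^ t` between `x = of 0` and
`b = of 1`, those of an extension of a group of order two by the cyclic group `⟨x⟩`. -/
def cyclicExtensionRels (n s : ℕ) (t : ℤ) : Set (FreeGroup (Fin 2)) :=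
  {FreeGroup.of 0 ^ n, FreeGroup.of 1 ^ 2 * (FreeGroup.of 0 ^ s)⁻¹,
    FreeGroup.of 1 * FreeGroup.of 0 * (FreeGroup.of 1)⁻¹ * (FreeGroup.of 0 ^ t)⁻¹}

theorem semidihedralRels_eq (m : ℕ) :
    semidihedralRels m = cyclicExtensionRels (2 ^ (m - 1)) 0 (2 ^ (m - 2) - 1 : ℕ) := by
  simp [semidihedralRels, cyclicExtensionRels, -Nat.cast_sub, -Nat.cast_pred]

/-- `G` is an extension of the cyclic group of order two, generated by the class of `b`, by the
cyclic group `⟨x⟩` of order `n`, with extension data `b ^ 2 = x ^ s` and `b * x * b⁻¹ = x ^ t`.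
As with `orderOf`, `n = 0` means that `x` has infinite order. -/
structure IsCyclicExtension (x b : G) (n s : ℕ) (t : ℤ) : Prop where
  index_eq_two : (zpowers x).index = 2
  notMem : b ∉ zpowers x
  orderOf_eq : orderOf x = n
  sq_eq : b ^ 2 = x ^ s
  conj_eq : b * x * b⁻¹ = x ^ t

theorem mem_zpowers_or_mul_inv_mem_of_mem_closure (hsq : b ^ 2 = x ^ s)
    (hconj : b * x * b⁻¹ = x ^ t) {g : G} (hg : g ∈ closure {x, b}) :
    g ∈ zpowers x ∨ g * b⁻¹ ∈ zpowers x := by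
  have mul_left {c g : G} (hc : c ∈ zpowers x) (hg : g ∈ zpowers x ∨ g * b⁻¹ ∈ zpowers x) :
      c * g ∈ zpowers x ∨ c * g * b⁻¹ ∈ zpowers x :=
    hg.imp (mul_mem hc) fun h => by rw [mul_assoc]; exact mul_mem hc h
  have hsq_mem : b ^ 2 ∈ zpowers x := hsq ▸ npow_mem_zpowers x s
  have conj_mem {c : G} (hc : c ∈ zpowers x) : b * c * b⁻¹ ∈ zpowers x := by
    obtain ⟨i, rfl⟩ := mem_zpowers_iff.1 hc
    rw [← conj_zpow, hconj]
    exact zpow_mem (zpow_mem (mem_zpowers x) t) i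
  have b_mul {g : G} (hg : g ∈ zpowers x ∨ g * b⁻¹ ∈ zpowers x) :
      b * g ∈ zpowers x ∨ b * g * b⁻¹ ∈ zpowers x := by
    refine hg.symm.imp (fun h => ?_) conj_mem
    rw [show b * g = b * (g * b⁻¹) * b⁻¹ * b ^ 2 by group]
    exact mul_mem (conj_mem h) hsq_mem
  induction hg using closure_induction_left with
  | one => exact .inl (one_mem _)
  | mul_left y hy g _ ih =>
    rcases hy with rfl | rfl
    · exact mul_left (mem_zpowers y) ih
    · exact b_mul ih
  | inv_mul_cancel y hy g _ ih =>
    rcases hy with rfl | rfl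
    · exact mul_left (inv_mem (mem_zpowers y)) ih
    · rw [show y⁻¹ * g = (y ^ 2)⁻¹ * (y * g) by group]
      exact mul_left (inv_mem hsq_mem) (b_mul ih)

theorem presentedGroup_mem_zpowers_or_mul_inv_mem
    (g : PresentedGroup (cyclicExtensionRels n s t)) :
    g ∈ zpowers (.of 0) ∨ g * (.of 1)⁻¹ ∈ zpowers (.of 0 : PresentedGroup _) := by
  refine mem_zpowers_or_mul_inv_mem_of_mem_closure (s := s) (t := t) ?_ ?_ ?_
  · exact mul_inv_eq_one.1 (PresentedGroup.one_of_mem (rels := cyclicExtensionRels n s t)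
      (by simp [cyclicExtensionRels]))
  · exact mul_inv_eq_one.1 (PresentedGroup.one_of_mem (rels := cyclicExtensionRels n s t)
      (by simp [cyclicExtensionRels]))
  · have hrange : Set.range (PresentedGroup.of (rels := cyclicExtensionRels n s t)) =
        {.of 0, .of 1} := by
      ext
      simp [Fin.exists_fin_two, eq_comm]
    rw [← hrange, PresentedGroup.closure_range_of]
    exact mem_top g

namespace IsCyclicExtension

theorem lift_eq_one (h : IsCyclicExtension x b n s t) {r : FreeGroup (Fin 2)}
    (hr : r ∈ cyclicExtensionRels n s t) : FreeGroup.lift ![x, b] r = 1 := by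
  rcases hr with rfl | rfl | rfl
  · simp [← h.orderOf_eq, pow_orderOf_eq_one]
  · simp [h.sq_eq]
  · simp [h.conj_eq]

/-- The homomorphism from the presented group that sends the two generators to `x` and `b`. -/
def ofPresentedGroup (h : IsCyclicExtension x b n s t) :
    PresentedGroup (cyclicExtensionRels n s t) →* G :=
  PresentedGroup.toGroup fun _ => h.lift_eq_one

@[simp]
theorem ofPresentedGroup_of_zero (h : IsCyclicExtension x b n s t) :
    h.ofPresentedGroup (.of 0) = x :=
  PresentedGroup.toGroup.of _

@[simp]
theorem ofPresentedGroup_of_one (h : IsCyclicExtension x b n s t) :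
    h.ofPresentedGroup (.of 1) = b :=
  PresentedGroup.toGroup.of _

theorem ofPresentedGroup_injective (h : IsCyclicExtension x b n s t) :
    Function.Injective h.ofPresentedGroup := by
  refine (injective_iff_map_eq_one _).2 fun g hg => ?_
  rcases presentedGroup_mem_zpowers_or_mul_inv_mem g with hmem | hmem <;>
    obtain ⟨i, hi⟩ := mem_zpowers_iff.1 hmem
  · have hxi : x ^ i = 1 := by simpa [← hi] using hg
    obtain ⟨j, rfl⟩ := h.orderOf_eq ▸ orderOf_dvd_iff_zpow_eq_one.2 hxi
    have hn : (.of 0 : PresentedGroup (cyclicExtensionRels n s t)) ^ n = 1 :=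
      PresentedGroup.one_of_mem (by simp [cyclicExtensionRels])
    rw [← hi, zpow_mul, zpow_natCast, hn, one_zpow]
  · have hbi : x ^ i = b⁻¹ := by simpa [hg] using congrArg h.ofPresentedGroup hi
    exact absurd (inv_mem_iff.1 (hbi ▸ zpow_mem_zpowers x i)) h.notMem

theorem ofPresentedGroup_surjective (h : IsCyclicExtension x b n s t) :
    Function.Surjective h.ofPresentedGroup := by
  rw [← MonoidHom.range_eq_top, eq_top_iff]
  have hb : b ∈ h.ofPresentedGroup.range := ⟨_, h.ofPresentedGroup_of_one⟩
  have hx : zpowers x ≤ h.ofPresentedGroup.range :=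
    zpowers_le.2 ⟨_, h.ofPresentedGroup_of_zero⟩
  rintro g -
  by_cases hg : g ∈ zpowers x
  · exact hx hg
  · have hgb : g * b ∈ zpowers x := by
      simp [mul_mem_iff_of_index_two h.index_eq_two, hg, h.notMem]
    exact (mul_mem_cancel_right hb).1 (hx hgb)

/-- A cyclic extension is presented by its extension data. -/
noncomputable def presentedGroupEquiv (h : IsCyclicExtension x b n s t) :
    PresentedGroup (cyclicExtensionRels n s t) ≃* G :=
  .ofBijective h.ofPresentedGroup ⟨h.ofPresentedGroup_injective, h.ofPresentedGroup_surjective⟩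

/-- Two cyclic extensions with the same extension data are isomorphic. -/
noncomputable def mulEquiv {H : Type*} [Group H] {y c : H} (h : IsCyclicExtension x b n s t)
    (h' : IsCyclicExtension y c n s t) : G ≃* H :=
  h.presentedGroupEquiv.symm.trans h'.presentedGroupEquiv

theorem nonempty_mulEquiv_semidihedralGroup {m : ℕ}
    (h : IsCyclicExtension x b (2 ^ (m - 1)) 0 (2 ^ (m - 2) - 1 : ℕ)) :
    Nonempty (G ≃* SemidihedralGroup m) := by
  have e : G ≃* PresentedGroup (semidihedralRels m) :=
    semidihedralRels_eq m ▸ h.presentedGroupEquiv.symm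
  exact ⟨e⟩

end IsCyclicExtension

theorem isCyclicExtension_dihedralGroup (n : ℕ) [NeZero n] :
    IsCyclicExtension (.r 1 : DihedralGroup n) (.sr 0) n 0 (-1) where
  index_eq_two := by
    rw [index_zpowers_eq_two_iff, DihedralGroup.orderOf_r_one, DihedralGroup.nat_card, mul_comm]
  notMem h := by
    obtain ⟨i, hi⟩ := mem_zpowers_iff.1 h
    simp at hi
  orderOf_eq := DihedralGroup.orderOf_r_one
  sq_eq := by rw [sq, DihedralGroup.sr_mul_self, pow_zero]
  conj_eq := by simp

theorem isCyclicExtension_quaternionGroup (n : ℕ) [NeZero n] :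
    IsCyclicExtension (.a 1 : QuaternionGroup n) (.xa 0) (2 * n) n (-1) where
  index_eq_two := by
    rw [index_zpowers_eq_two_iff, QuaternionGroup.orderOf_a_one, Nat.card_eq_fintype_card,
      QuaternionGroup.card]
    ring
  notMem h := by
    obtain ⟨i, hi⟩ := mem_powers_iff_mem_zpowers.2 h
    simp at hi
  orderOf_eq := QuaternionGroup.orderOf_a_one
  sq_eq := by rw [QuaternionGroup.xa_sq, QuaternionGroup.a_one_pow]
  conj_eq := by
    rw [zpow_neg_one, mul_inv_eq_iff_eq_mul, eq_inv_mul_iff_mul_eq]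
    simp

end CyclicExtension

section Classification

variable {G : Type*} [Group G] [Finite G]

theorem exists_orderOf_eq_two_pow_add_two (hG : IsPGroup 2 G) (h4 : (commutator G).index = 4)
    (hcomm : commutator G ≠ ⊥) {x : G} (hx : (zpowers x).index = 2) :
    ∃ k, orderOf x = 2 ^ (k + 2) := by
  obtain ⟨j, hj⟩ := IsPGroup.iff_orderOf.1 hG x
  have hcard := card_mul_index (commutator G)
  rw [h4] at hcard
  have hlt := (one_lt_card_iff_ne_bot _).2 hcomm
  rw [index_zpowers_eq_two_iff] at hx
  have hj1 : 1 < j := (Nat.pow_lt_pow_iff_right one_lt_two).1 (by omega)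
  exact ⟨j - 2, by rw [hj, Nat.sub_add_cancel hj1]⟩

variable {x b v : G} {k : ℕ} (h4 : (commutator G).index = 4) (hA : (zpowers x).index = 2)
  (hb : b ∉ zpowers x) (hx : orderOf x = 2 ^ (k + 2))
include h4 hA hb hx

theorem eq_one_or_eq_pow_of_commute (hv : v ∈ zpowers x) (hbv : Commute b v) :
    v = 1 ∨ v = x ^ 2 ^ (k + 1) := by
  refine eq_one_or_eq_of_commute h4 hA hb (npow_mem_zpowers x _) ?_ ?_ hv hbv
  · rw [pow_succ, pow_mul]
    refine commute_sq_of_pow_four_eq_one h4 hA hb (npow_mem_zpowers x _) ?_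
    rw [← pow_mul, ← pow_orderOf_eq_one x, hx]
    congr 1
    ring
  · refine pow_ne_one_of_lt_orderOf (by positivity) ?_
    rw [hx]
    exact Nat.pow_lt_pow_right one_lt_two (by omega)

theorem sq_eq_one_or_eq_pow : b ^ 2 = 1 ∨ b ^ 2 = x ^ 2 ^ (k + 1) :=
  eq_one_or_eq_pow_of_commute h4 hA hb hx (sq_mem_of_index_two hA b) (.self_pow b 2)

theorem not_commute_of_notMem : ¬ Commute b x := fun hbx => by
  have hlt : 1 < 2 ^ (k + 1) := Nat.one_lt_two_pow (by omega)
  have h2 : 2 ^ (k + 1) < orderOf x := hx ▸ Nat.pow_lt_pow_right one_lt_two (by omega)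
  rcases eq_one_or_eq_pow_of_commute h4 hA hb hx (mem_zpowers x) hbx with h | h
  · rw [h, orderOf_one] at h2
    omega
  · have := pow_injOn_Iio_orderOf (Set.mem_Iio.2 (hlt.trans h2)) h2 ((pow_one x).trans h)
    omega

theorem conj_eq_inv_or_eq_pow :
    b * x * b⁻¹ = x⁻¹ ∨ 1 ≤ k ∧ b * x * b⁻¹ = x ^ (2 ^ (k + 1) - 1) := by
  have hconj : b * x * b⁻¹ ∈ zpowers x :=
    (normal_of_index_eq_two hA).conj_mem x (mem_zpowers x) b
  rcases eq_one_or_eq_pow_of_commute h4 hA hb hx (mul_mem (mem_zpowers x) hconj)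
    (commute_mul_conj_of_index_two hA (mem_zpowers x) b) with h | h
  · exact .inl (eq_inv_of_mul_eq_one_right h)
  · rw [← mul_pow_sub_one (by positivity), mul_right_inj] at h
    refine .inr ⟨Nat.one_le_iff_ne_zero.2 ?_, h⟩
    rintro rfl
    exact not_commute_of_notMem h4 hA hb hx (mul_inv_eq_iff_eq_mul.1 (h.trans (pow_one x)))

theorem exists_isCyclicExtension_of_conj_eq_pow (hconj : b * x * b⁻¹ = x ^ (2 ^ (k + 1) - 1)) :
    ∃ c : G, IsCyclicExtension x c (2 ^ (k + 2)) 0 (2 ^ (k + 1) - 1 : ℕ) := by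
  rcases sq_eq_one_or_eq_pow h4 hA hb hx with hsq | hsq
  · exact ⟨b, hA, hb, hx, by rw [hsq, pow_zero], by rw [hconj, zpow_natCast]⟩
  refine ⟨x * b, hA, by rwa [mul_mem_cancel_left (mem_zpowers x)], hx, ?_, ?_⟩
  · calc (x * b) ^ 2 = x * (b * x * b⁻¹) * b ^ 2 := by rw [sq]; group
      _ = x ^ orderOf x := by
        rw [hconj, hsq, mul_pow_sub_one (by positivity), ← pow_add, hx]
        congr 1
        ring
      _ = x ^ 0 := by rw [pow_orderOf_eq_one, pow_zero]
  · calc x * b * x * (x * b)⁻¹ = x * (b * x * b⁻¹) * x⁻¹ := by group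
      _ = x ^ ((2 ^ (k + 1) - 1 : ℕ) : ℤ) := by
        rw [hconj, zpow_natCast, ← pow_succ', pow_succ, mul_inv_cancel_right]

theorem exists_isCyclicExtension_of_notMem :
    ∃ c : G, IsCyclicExtension x c (2 ^ (k + 2)) (2 ^ (k + 1)) (-1) ∨
      IsCyclicExtension x c (2 ^ (k + 2)) 0 (-1) ∨
      1 ≤ k ∧ IsCyclicExtension x c (2 ^ (k + 2)) 0 (2 ^ (k + 1) - 1 : ℕ) := by
  rcases conj_eq_inv_or_eq_pow h4 hA hb hx with hconj | ⟨hk, hconj⟩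
  · rw [← zpow_neg_one x] at hconj
    rcases sq_eq_one_or_eq_pow h4 hA hb hx with hsq | hsq
    · exact ⟨b, .inr (.inl ⟨hA, hb, hx, by rw [hsq, pow_zero], hconj⟩)⟩
    · exact ⟨b, .inl ⟨hA, hb, hx, hsq, hconj⟩⟩
  · obtain ⟨c, hc⟩ := exists_isCyclicExtension_of_conj_eq_pow h4 hA hb hx hconj
    exact ⟨c, .inr (.inr ⟨hk, hc⟩)⟩

end Classification

theorem exists_isCyclicExtension {G : Type*} [Group G] [Finite G] (hG : IsPGroup 2 G)
    (h4 : (commutator G).index = 4) (hcomm : commutator G ≠ ⊥) :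
    ∃ (k : ℕ) (x c : G), IsCyclicExtension x c (2 ^ (k + 2)) (2 ^ (k + 1)) (-1) ∨
      IsCyclicExtension x c (2 ^ (k + 2)) 0 (-1) ∨
      1 ≤ k ∧ IsCyclicExtension x c (2 ^ (k + 2)) 0 (2 ^ (k + 1) - 1 : ℕ) := by
  obtain ⟨x, hA⟩ := exists_index_zpowers_eq_two hG h4
  obtain ⟨b, hb⟩ := exists_notMem_of_index_two hA
  obtain ⟨k, hx⟩ := exists_orderOf_eq_two_pow_add_two hG h4 hcomm hA
  exact ⟨k, x, exists_isCyclicExtension_of_notMem h4 hA hb hx⟩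

/-- **Classification of finite 2-groups with abelianization of type (2,2).** Such a
group is Klein four, generalized quaternion `Q_{2^m}` (`m ≥ 3`), dihedral `D_{2^m}`
(`m ≥ 3`) or semidihedral `S_{2^m}` (`m ≥ 4`). (Here `DihedralGroup k` and
`QuaternionGroup k` have orders `2k` and `4k`.) -/
theorem classification_of_two_groups_with_abelianization_klein
    (G : Type*) [Group G] [Finite G] (hG : IsPGroup 2 G)
    (h : Nonempty (Abelianization G ≃*
      (Multiplicative (ZMod 2) × Multiplicative (ZMod 2)))) :
    Nonempty (G ≃* (Multiplicative (ZMod 2) × Multiplicative (ZMod 2))) ∨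
    (∃ m, 3 ≤ m ∧ Nonempty (G ≃* QuaternionGroup (2 ^ (m - 2)))) ∨
    (∃ m, 3 ≤ m ∧ Nonempty (G ≃* DihedralGroup (2 ^ (m - 1)))) ∨
    (∃ m, 4 ≤ m ∧ Nonempty (G ≃* SemidihedralGroup m)) := by
  obtain ⟨e⟩ := h
  have h4 : (commutator G).index = 4 := (Nat.card_congr e.toEquiv).trans (by simp)
  by_cases hcomm : commutator G = ⊥
  · let f : Abelianization G ≃* G :=
      (QuotientGroup.quotientMulEquivOfEq hcomm).trans QuotientGroup.quotientBot
    exact .inl ⟨f.symm.trans e⟩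
  obtain ⟨k, x, b, hQ | hD | ⟨hk, hS⟩⟩ := exists_isCyclicExtension hG h4 hcomm
  · rw [pow_succ' 2 (k + 1)] at hQ
    exact .inr (.inl ⟨k + 3, by omega, ⟨hQ.mulEquiv (isCyclicExtension_quaternionGroup _)⟩⟩)
  · exact .inr (.inr (.inl ⟨k + 3, by omega, ⟨hD.mulEquiv (isCyclicExtension_dihedralGroup _)⟩⟩))
  · exact .inr (.inr (.inr ⟨k + 3, by omega, hS.nonempty_mulEquiv_semidihedralGroup⟩))
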